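/- arXiv:1303.3754 — 6 statements merged into one kernel-verified Lean document; each statement's English description precedes it below -/
import Mathlib

section
/- For every t ≥ 1 and every u ∈ ℝ^d, P_t(u) = uᵀ D_t u − 2 uᵀ e_t + f_t, where each matrix D_t is symmetric positive definite. -/
open Matrix Finset

/-- `Q t u = b ‖u₁‖² + c ∑_{s=1}^{t-1} ‖u_{s+1} − u_s‖² + ∑_{s=1}^{t} (y_s − u_sᵀ x_s)²`. -/
noncomputable def Qfun (d : ℕ) (b c : ℝ) (x : ℕ → Fin d → ℝ) (y : ℕ → ℝ)
    (t : ℕ) (u : ℕ → Fin d → ℝ) : ℝ :=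
  b * (u 1 ⬝ᵥ u 1)
    + c * ∑ s ∈ Finset.range (t - 1), (u (s + 2) - u (s + 1)) ⬝ᵥ (u (s + 2) - u (s + 1))
    + ∑ s ∈ Finset.range t, (y (s + 1) - u (s + 1) ⬝ᵥ x (s + 1)) ^ 2

/-- `P t u = inf over u₁,…,u_{t-1} of Q t (u₁,…,u_{t-1},u)`. -/
noncomputable def Pfun (d : ℕ) (b c : ℝ) (x : ℕ → Fin d → ℝ) (y : ℕ → ℝ)
    (t : ℕ) (u : Fin d → ℝ) : ℝ :=
  ⨅ v : ℕ → Fin d → ℝ, Qfun d b c x y t (Function.update v t u)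

/-- `D₁ = b I + x₁ x₁ᵀ`, `D_t = (D_{t-1}⁻¹ + c⁻¹ I)⁻¹ + x_t x_tᵀ` for `t ≥ 2`
(the value at `0` is irrelevant). -/
noncomputable def Dmat (d : ℕ) (b c : ℝ) (x : ℕ → Fin d → ℝ) :
    ℕ → Matrix (Fin d) (Fin d) ℝ
  | 0 => 1
  | 1 => b • (1 : Matrix (Fin d) (Fin d) ℝ) + vecMulVec (x 1) (x 1)
  | (t + 2) => ((Dmat d b c x (t + 1))⁻¹ + c⁻¹ • 1)⁻¹ + vecMulVec (x (t + 2)) (x (t + 2))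

/-- `e₁ = y₁ x₁`, `e_t = (I + c⁻¹ D_{t-1})⁻¹ e_{t-1} + y_t x_t` for `t ≥ 2`. -/
noncomputable def evec (d : ℕ) (b c : ℝ) (x : ℕ → Fin d → ℝ) (y : ℕ → ℝ) :
    ℕ → Fin d → ℝ
  | 0 => 0
  | 1 => y 1 • x 1
  | (t + 2) => (1 + c⁻¹ • Dmat d b c x (t + 1))⁻¹ *ᵥ evec d b c x y (t + 1)
      + y (t + 2) • x (t + 2)

/-- `f₁ = y₁²`, `f_t = f_{t-1} − e_{t-1}ᵀ (c I + D_{t-1})⁻¹ e_{t-1} + y_t²` for `t ≥ 2`. -/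
noncomputable def fsc (d : ℕ) (b c : ℝ) (x : ℕ → Fin d → ℝ) (y : ℕ → ℝ) : ℕ → ℝ
  | 0 => 0
  | 1 => (y 1) ^ 2
  | (t + 2) => fsc d b c x y (t + 1)
      - evec d b c x y (t + 1) ⬝ᵥ ((c • (1 : Matrix (Fin d) (Fin d) ℝ)
          + Dmat d b c x (t + 1))⁻¹ *ᵥ evec d b c x y (t + 1))
      + (y (t + 2)) ^ 2

/-!
Eliminating `u₁, …, u_{t-1}` one at a time gives the Bellman recursion
`P_{t+1}(u) = min_w (P_t(w) + c ‖u - w‖²) + (y_{t+1} - uᵀ x_{t+1})²`.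
If `P_t` is a quadratic function with positive definite leading matrix, the inner minimum is found
by completing the square in `w`, and the Woodbury identity brings its leading matrix to the form
`(D_t⁻¹ + c⁻¹ I)⁻¹`. The squared residual adds a rank-one term. Every minimum is attained, so the
recursion is carried out on least elements and never on bare infima.
-/

theorem dotProduct_mulVec_comm_of_isSymm {n R : Type*} [Fintype n]
    [NonUnitalCommSemiring R] {A : Matrix n n R} (hA : A.IsSymm) (u v : n → R) :
    u ⬝ᵥ (A *ᵥ v) = v ⬝ᵥ (A *ᵥ u) := by
  rw [← dotProduct_transpose_mulVec, hA.eq]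

section QuadraticFunction

variable {n R : Type*} [Fintype n] [CommRing R]

/-- The inhomogeneous quadratic function `u ↦ uᵀ D u - 2 uᵀ e + f`, the shape preserved by the
Bellman recursion. -/
def quadraticFn (D : Matrix n n R) (e : n → R) (f : R) (u : n → R) : R :=
  u ⬝ᵥ (D *ᵥ u) - 2 * (u ⬝ᵥ e) + f

theorem quadraticFn_add_sq_residual (D : Matrix n n R) (e : n → R) (f : R) (x : n → R) (y : R)
    (u : n → R) :
    quadraticFn D e f u + (y - u ⬝ᵥ x) ^ 2 =
      quadraticFn (D + vecMulVec x x) (e + y • x) (f + y ^ 2) u := by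
  have rank_one : u ⬝ᵥ (vecMulVec x x *ᵥ u) = (u ⬝ᵥ x) ^ 2 := by
    simp [vecMulVec_mulVec, dotProduct_comm x u, sq]
  simp only [quadraticFn, add_mulVec, dotProduct_add, dotProduct_smul, smul_eq_mul, rank_one]
  ring

theorem quadraticFn_add_dotProduct_mulVec_sub {C : Matrix n n R} (hC : C.IsSymm)
    (D : Matrix n n R) (e : n → R) (f : R) (u w : n → R) :
    quadraticFn D e f w + (u - w) ⬝ᵥ (C *ᵥ (u - w)) =
      quadraticFn (C + D) (e + C *ᵥ u) (f + u ⬝ᵥ (C *ᵥ u)) w := by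
  simp only [quadraticFn, add_mulVec, mulVec_sub, dotProduct_add, dotProduct_sub, sub_dotProduct,
    dotProduct_mulVec_comm_of_isSymm hC u w]
  ring

variable [DecidableEq n]

theorem quadraticFn_completeSquare {A : Matrix n n R} (hA : A.IsSymm) (hA_unit : IsUnit A)
    (g : n → R) (h : R) (w : n → R) :
    quadraticFn A g h w =
      (w - A⁻¹ *ᵥ g) ⬝ᵥ (A *ᵥ (w - A⁻¹ *ᵥ g)) + (h - g ⬝ᵥ (A⁻¹ *ᵥ g)) := by
  have mulVec_vertex : A *ᵥ (A⁻¹ *ᵥ g) = g := by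
    rw [mulVec_mulVec, mul_nonsing_inv _ ((isUnit_iff_isUnit_det _).1 hA_unit), one_mulVec]
  simp only [quadraticFn, mulVec_sub, dotProduct_sub, sub_dotProduct, mulVec_vertex,
    dotProduct_mulVec_comm_of_isSymm hA (A⁻¹ *ᵥ g) w, dotProduct_comm (A⁻¹ *ᵥ g) g]
  ring

theorem inv_one_add_mul_inv {C : Matrix n n R} (hC : IsUnit C) (D : Matrix n n R) :
    (1 + D * C⁻¹)⁻¹ = C * (C + D)⁻¹ := by
  have hC_det := (isUnit_iff_isUnit_det C).1 hC
  rw [← mul_nonsing_inv C hC_det, ← add_mul, Matrix.mul_inv_rev, nonsing_inv_nonsing_inv C hC_det]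

theorem inv_inv_add_inv {C D : Matrix n n R} (hC : IsUnit C) (hD : IsUnit D)
    (hCD : IsUnit (C + D)) :
    (D⁻¹ + C⁻¹)⁻¹ = C - C * (C + D)⁻¹ * C := by
  have hC_inv := nonsing_inv_nonsing_inv C ((isUnit_iff_isUnit_det C).1 hC)
  have hD_inv := nonsing_inv_nonsing_inv D ((isUnit_iff_isUnit_det D).1 hD)
  have woodbury := add_mul_mul_inv_eq_sub C⁻¹ 1 D⁻¹ 1 (isUnit_nonsing_inv_iff.2 hC)
    (isUnit_nonsing_inv_iff.2 hD) (by simpa [hC_inv, hD_inv, add_comm] using hCD)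
  simpa [hC_inv, hD_inv, add_comm] using woodbury

end QuadraticFunction

section Minimization

variable {n : Type*} [Fintype n] [DecidableEq n]

theorem isLeast_range_quadraticFn {A : Matrix n n ℝ} (hA : A.PosDef) (g : n → ℝ) (h : ℝ) :
    IsLeast (Set.range (quadraticFn A g h)) (h - g ⬝ᵥ (A⁻¹ *ᵥ g)) := by
  have complete_square :=
    quadraticFn_completeSquare (isHermitian_iff_isSymm.1 hA.isHermitian) hA.isUnit g h
  refine ⟨⟨A⁻¹ *ᵥ g, by simp [complete_square]⟩, ?_⟩
  rintro _ ⟨w, rfl⟩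
  rw [complete_square]
  have := hA.posSemidef.dotProduct_mulVec_nonneg (w - A⁻¹ *ᵥ g)
  rw [star_trivial] at this
  linarith

theorem isLeast_range_quadraticFn_add_dotProduct_mulVec_sub {C D : Matrix n n ℝ} (hC : C.PosDef)
    (hD : D.PosDef) (e : n → ℝ) (f : ℝ) (u : n → ℝ) :
    IsLeast (Set.range fun w => quadraticFn D e f w + (u - w) ⬝ᵥ (C *ᵥ (u - w)))
      (quadraticFn (D⁻¹ + C⁻¹)⁻¹ ((1 + D * C⁻¹)⁻¹ *ᵥ e) (f - e ⬝ᵥ ((C + D)⁻¹ *ᵥ e)) u) := by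
  have hCD := hC.add hD
  have hC_symm := isHermitian_iff_isSymm.1 hC.isHermitian
  have hCD_inv_symm := (isHermitian_iff_isSymm.1 hCD.isHermitian).inv
  simp only [quadraticFn_add_dotProduct_mulVec_sub hC_symm]
  convert isLeast_range_quadraticFn hCD (e + C *ᵥ u) (f + u ⬝ᵥ (C *ᵥ u)) using 1
  have move_C (v : n → ℝ) : (C *ᵥ u) ⬝ᵥ v = u ⬝ᵥ (C *ᵥ v) := by
    rw [dotProduct_comm, dotProduct_mulVec_comm_of_isSymm hC_symm]
  have cross : e ⬝ᵥ ((C + D)⁻¹ *ᵥ (C *ᵥ u)) = u ⬝ᵥ (C *ᵥ ((C + D)⁻¹ *ᵥ e)) := by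
    rw [dotProduct_mulVec_comm_of_isSymm hCD_inv_symm, move_C]
  rw [inv_inv_add_inv hC.isUnit hD.isUnit hCD.isUnit, inv_one_add_mul_inv hC.isUnit]
  simp only [quadraticFn, sub_mulVec, ← mulVec_mulVec, mulVec_add, add_dotProduct, dotProduct_add,
    dotProduct_sub, move_C, cross]
  ring

theorem isLeast_range_quadraticFn_add_mul_dotProduct_sub {c : ℝ} (hc : 0 < c) {D : Matrix n n ℝ}
    (hD : D.PosDef) (e : n → ℝ) (f : ℝ) (u : n → ℝ) :
    IsLeast (Set.range fun w => quadraticFn D e f w + c * ((u - w) ⬝ᵥ (u - w)))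
      (quadraticFn (D⁻¹ + c⁻¹ • 1)⁻¹ ((1 + c⁻¹ • D)⁻¹ *ᵥ e)
        (f - e ⬝ᵥ ((c • (1 : Matrix n n ℝ) + D)⁻¹ *ᵥ e)) u) := by
  have inv_smul_one : (c • (1 : Matrix n n ℝ))⁻¹ = c⁻¹ • 1 :=
    inv_eq_left_inv (by simp [smul_smul, hc.ne'])
  simpa [inv_smul_one, smul_mulVec] using
    isLeast_range_quadraticFn_add_dotProduct_mulVec_sub (PosDef.one.smul hc) hD e f u

end Minimization

section DynamicProgramming

variable {d : ℕ} {b c : ℝ} {x : ℕ → Fin d → ℝ} {y : ℕ → ℝ} {t : ℕ}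

theorem Qfun_one_update (v : ℕ → Fin d → ℝ) (u : Fin d → ℝ) :
    Qfun d b c x y 1 (Function.update v 1 u) = b * (u ⬝ᵥ u) + (y 1 - u ⬝ᵥ x 1) ^ 2 := by
  simp [Qfun]

theorem Qfun_succ (v : ℕ → Fin d → ℝ) :
    Qfun d b c x y (t + 2) v =
      Qfun d b c x y (t + 1) v + c * ((v (t + 2) - v (t + 1)) ⬝ᵥ (v (t + 2) - v (t + 1)))
        + (y (t + 2) - v (t + 2) ⬝ᵥ x (t + 2)) ^ 2 := by
  simp only [Qfun, Nat.add_one_sub_one, Finset.sum_range_succ _ (t + 1), Finset.sum_range_succ _ t]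
  ring

theorem Qfun_congr {v w : ℕ → Fin d → ℝ} (h : Set.EqOn v w (Set.Icc 1 (t + 1))) :
    Qfun d b c x y (t + 1) v = Qfun d b c x y (t + 1) w := by
  induction t with
  | zero => simp [Qfun, h (x := 1) (by simp)]
  | succ t ih =>
    rw [Qfun_succ, Qfun_succ, ih (h.mono (Set.Icc_subset_Icc_right (by lia))),
      h (x := t + 2) (by simp), h (x := t + 1) (by simp)]

theorem Qfun_succ_update (v : ℕ → Fin d → ℝ) (u : Fin d → ℝ) :
    Qfun d b c x y (t + 2) (Function.update v (t + 2) u) =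
      Qfun d b c x y (t + 1) v + c * ((u - v (t + 1)) ⬝ᵥ (u - v (t + 1)))
        + (y (t + 2) - u ⬝ᵥ x (t + 2)) ^ 2 := by
  have eqOn : Set.EqOn (Function.update v (t + 2) u) v (Set.Icc 1 (t + 1)) :=
    fun s hs => Function.update_of_ne (by have := hs.2; lia) _ _
  rw [Qfun_succ, Qfun_congr eqOn, eqOn (x := t + 1) (by simp), Function.update_self]

theorem isLeast_range_Qfun_succ {V : (Fin d → ℝ) → ℝ}
    (hV : ∀ w, IsLeast (Set.range fun v => Qfun d b c x y (t + 1) (Function.update v (t + 1) w))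
      (V w))
    {u : Fin d → ℝ} {m : ℝ}
    (hm : IsLeast (Set.range fun w => V w + c * ((u - w) ⬝ᵥ (u - w))) m) :
    IsLeast (Set.range fun v => Qfun d b c x y (t + 2) (Function.update v (t + 2) u))
      (m + (y (t + 2) - u ⬝ᵥ x (t + 2)) ^ 2) := by
  constructor
  · obtain ⟨w, rfl⟩ := hm.1
    obtain ⟨v, hv⟩ := (hV w).1
    refine ⟨Function.update v (t + 1) w, ?_⟩
    simp only [Qfun_succ_update, Function.update_self, hv]
  · rintro _ ⟨v, rfl⟩
    have hVv : V (v (t + 1)) ≤ Qfun d b c x y (t + 1) v :=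
      (hV (v (t + 1))).2 ⟨v, by simp only [Function.update_eq_self]⟩
    have hmv : m ≤ V (v (t + 1)) + c * ((u - v (t + 1)) ⬝ᵥ (u - v (t + 1))) :=
      hm.2 ⟨v (t + 1), rfl⟩
    simp only [Qfun_succ_update]
    linarith

theorem Dmat_succ_posDef (hb : 0 < b) (hc : 0 < c) (x : ℕ → Fin d → ℝ) (t : ℕ) :
    (Dmat d b c x (t + 1)).PosDef := by
  have rank_one (a : Fin d → ℝ) : (vecMulVec a a).PosSemidef := by
    simpa only [star_trivial] using posSemidef_vecMulVec_self_star a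
  induction t with
  | zero => exact (PosDef.one.smul hb).add_posSemidef (rank_one _)
  | succ t ih =>
    exact (ih.inv.add (PosDef.one.smul (inv_pos.2 hc))).inv.add_posSemidef (rank_one _)

theorem isLeast_range_Qfun (hb : 0 < b) (hc : 0 < c) (u : Fin d → ℝ) :
    IsLeast (Set.range fun v => Qfun d b c x y (t + 1) (Function.update v (t + 1) u))
      (quadraticFn (Dmat d b c x (t + 1)) (evec d b c x y (t + 1)) (fsc d b c x y (t + 1)) u) := by
  induction t generalizing u with
  | zero =>
    have initial : b * (u ⬝ᵥ u) + (y 1 - u ⬝ᵥ x 1) ^ 2 =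
        quadraticFn (Dmat d b c x 1) (evec d b c x y 1) (fsc d b c x y 1) u := by
      simpa [quadraticFn, smul_mulVec, Dmat, evec, fsc] using
        quadraticFn_add_sq_residual (b • (1 : Matrix (Fin d) (Fin d) ℝ)) 0 0 (x 1) (y 1) u
    simp only [zero_add, Qfun_one_update, initial, Set.range_const, isLeast_singleton]
  | succ t ih =>
    have step := isLeast_range_Qfun_succ ih
      (isLeast_range_quadraticFn_add_mul_dotProduct_sub hc (Dmat_succ_posDef hb hc x t) _ _ u)
    rwa [quadraticFn_add_sq_residual] at step

end DynamicProgramming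

theorem laser_P_quadratic_form_general (d : ℕ) (b c : ℝ) (hb : 0 < b) (hc : 0 < c)
    (x : ℕ → Fin d → ℝ) (y : ℕ → ℝ) :
    ∀ t : ℕ, 1 ≤ t →
      (Dmat d b c x t).PosDef ∧
      ∀ u : Fin d → ℝ,
        Pfun d b c x y t u =
          u ⬝ᵥ (Dmat d b c x t *ᵥ u) - 2 * (u ⬝ᵥ evec d b c x y t)
            + fsc d b c x y t := by
  rintro (_ | t) ht
  · contradiction
  · exact ⟨Dmat_succ_posDef hb hc x t, fun u => (isLeast_range_Qfun hb hc u).csInf_eq⟩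

theorem laser_P_quadratic_form (d : ℕ) (hd : 1 ≤ d) (b c : ℝ) (hb : 0 < b) (hbc : b < c)
    (x : ℕ → Fin d → ℝ) (y : ℕ → ℝ) :
    ∀ t : ℕ, 1 ≤ t →
      (Dmat d b c x t).PosDef ∧
      ∀ u : Fin d → ℝ,
        Pfun d b c x y t u =
          u ⬝ᵥ (Dmat d b c x t *ᵥ u) - 2 * (u ⬝ᵥ evec d b c x y t)
            + fsc d b c x y t := by
  exact laser_P_quadratic_form_general d b c hb (hb.trans hbc) x y
end

section
/- Let A be a d×d real symmetric positive definite matrix, c > 0, and x ∈ ℝ^d. Set D = (A^{-1} + c^{-1}·I)^{-1} + x xᵀ and A' = (I + c^{-1}·A)^{-1}. Then the matrix A' D^{-1} x xᵀ D^{-1} A' − A^{-1} + A'(D^{-1} A' + c^{-1}·I) is negative semidefinite. -/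
open Matrix

/-!
Matrix inversion is operator convex: its linearization at `D`, evaluated at a positive definite `Q`,
lies below `Q⁻¹`, and the gap is the remainder `D⁻¹ (Q - D) Q⁻¹ (Q - D) D⁻¹`. For
`P = A⁻¹ + c⁻¹ I`, `Q = P⁻¹` and `D = Q + x xᵀ` this says `D⁻¹ + D⁻¹ x xᵀ D⁻¹ ≤ P`. Since
`A' = A⁻¹ P⁻¹ = P⁻¹ A⁻¹`, conjugating by `A'` turns the right-hand side into
`A' P A' = A⁻¹ - c⁻¹ A'`, which is the claim. The argument survives replacing `c⁻¹ I` and `x xᵀ` by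
more general matrices `C` and `X`, with `A'` splitting into `L = (I + C A)⁻¹` and
`R = (I + A C)⁻¹`.
-/

section Ring

variable {n α : Type*} [Fintype n] [DecidableEq n] [CommRing α] {A C D Q : Matrix n n α}

theorem inv_sub_tangent_eq (h : IsUnit Q ↔ IsUnit D) :
    Q⁻¹ - (D⁻¹ - D⁻¹ * (Q - D) * D⁻¹) = D⁻¹ * (Q - D) * Q⁻¹ * (Q - D) * D⁻¹ := by
  have first_order : D⁻¹ - Q⁻¹ = D⁻¹ * (Q - D) * Q⁻¹ := Matrix.inv_sub_inv h.symm
  have first_order' : Q⁻¹ - D⁻¹ = Q⁻¹ * (D - Q) * D⁻¹ := Matrix.inv_sub_inv h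
  calc Q⁻¹ - (D⁻¹ - D⁻¹ * (Q - D) * D⁻¹)
      = D⁻¹ * (Q - D) * D⁻¹ - (D⁻¹ - Q⁻¹) := by abel
    _ = -(D⁻¹ * (Q - D) * (Q⁻¹ - D⁻¹)) := by rw [first_order]; noncomm_ring
    _ = D⁻¹ * (Q - D) * Q⁻¹ * (Q - D) * D⁻¹ := by rw [first_order']; noncomm_ring

theorem inv_one_add_mul (hA : IsUnit A) : (1 + C * A)⁻¹ = A⁻¹ * (A⁻¹ + C)⁻¹ := by
  rw [← Matrix.mul_inv_rev, add_mul, nonsing_inv_mul A ((isUnit_iff_isUnit_det A).1 hA)]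

theorem inv_one_add_mul' (hA : IsUnit A) : (1 + A * C)⁻¹ = (A⁻¹ + C)⁻¹ * A⁻¹ := by
  rw [← Matrix.mul_inv_rev, mul_add, mul_nonsing_inv A ((isUnit_iff_isUnit_det A).1 hA)]

theorem inv_one_add_mul_mul_mul_inv_one_add_mul (hA : IsUnit A) (hP : IsUnit (A⁻¹ + C)) :
    (1 + C * A)⁻¹ * (A⁻¹ + C) * (1 + A * C)⁻¹ = A⁻¹ - (1 + C * A)⁻¹ * C := by
  have hPdet := (isUnit_iff_isUnit_det _).1 hP
  have left_cancel : (1 + C * A)⁻¹ * (A⁻¹ + C) = A⁻¹ := by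
    rw [inv_one_add_mul hA, nonsing_inv_mul_cancel_right _ _ hPdet]
  have right_cancel : (A⁻¹ + C) * (1 + A * C)⁻¹ = A⁻¹ := by
    rw [inv_one_add_mul' hA, mul_nonsing_inv_cancel_left _ _ hPdet]
  rw [mul_assoc, right_cancel, eq_sub_iff_add_eq, ← mul_add, left_cancel]

end Ring

section StarRing

variable {n α : Type*} [Fintype n] [DecidableEq n] [CommRing α] [StarRing α]
  {A C D Q X : Matrix n n α}

theorem conjTranspose_inv_one_add_mul (hA : IsUnit A) (hAH : A.IsHermitian)
    (hPH : (A⁻¹ + C).IsHermitian) : ((1 + A * C)⁻¹)ᴴ = (1 + C * A)⁻¹ := by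
  rw [inv_one_add_mul hA, inv_one_add_mul' hA, conjTranspose_mul, hAH.inv.eq, hPH.inv.eq]

variable [PartialOrder α]

theorem posSemidef_inv_sub_tangent (hQ : Q.PosSemidef) (hD : D.IsHermitian)
    (h : IsUnit Q ↔ IsUnit D) : (Q⁻¹ - (D⁻¹ - D⁻¹ * (Q - D) * D⁻¹)).PosSemidef := by
  have hadj : ((Q - D) * D⁻¹)ᴴ = D⁻¹ * (Q - D) := by
    rw [conjTranspose_mul, hD.inv.eq, (hQ.isHermitian.sub hD).eq]
  rw [inv_sub_tangent_eq h, mul_assoc _ (Q - D) D⁻¹, ← hadj]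
  exact hQ.inv.conjTranspose_mul_mul_same _

theorem laser_technical_negsemidef_general {L R : Matrix n n α}
    (hA : IsUnit A) (hAH : A.IsHermitian)
    (hP : IsUnit (A⁻¹ + C)) (hPpos : (A⁻¹ + C).PosSemidef) (hX : X.IsHermitian)
    (hD : D = (A⁻¹ + C)⁻¹ + X) (hDunit : IsUnit D)
    (hL : L = (1 + C * A)⁻¹) (hR : R = (1 + A * C)⁻¹) :
    (-(L * D⁻¹ * X * D⁻¹ * R - A⁻¹ + L * (D⁻¹ * R + C))).PosSemidef := by
  have hDH : D.IsHermitian := hD ▸ hPpos.isHermitian.inv.add hX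
  have hRL : Rᴴ = L := by
    rw [hL, hR, conjTranspose_inv_one_add_mul hA hAH hPpos.isHermitian]
  have tangent_le : (A⁻¹ + C - (D⁻¹ + D⁻¹ * X * D⁻¹)).PosSemidef := by
    have hXD : (A⁻¹ + C)⁻¹ - D = -X := by rw [hD]; abel
    have := posSemidef_inv_sub_tangent hPpos.inv hDH
      (iff_of_true (isUnit_nonsing_inv_iff.2 hP) hDunit)
    rwa [nonsing_inv_nonsing_inv _ ((isUnit_iff_isUnit_det _).1 hP), hXD, mul_neg, neg_mul,
      sub_neg_eq_add] at this
  have conj_eq : -(L * D⁻¹ * X * D⁻¹ * R - A⁻¹ + L * (D⁻¹ * R + C)) =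
      Rᴴ * (A⁻¹ + C - (D⁻¹ + D⁻¹ * X * D⁻¹)) * R := by
    have hLPR : L * (A⁻¹ + C) * R = A⁻¹ - L * C := by
      rw [hL, hR, inv_one_add_mul_mul_mul_inv_one_add_mul hA hP]
    rw [hRL, mul_sub, sub_mul, hLPR]
    noncomm_ring
  exact conj_eq ▸ tangent_le.conjTranspose_mul_mul_same R

end StarRing

theorem laser_technical_negsemidef (d : ℕ) (hd : 1 ≤ d)
    (A : Matrix (Fin d) (Fin d) ℝ) (hA : A.PosDef)
    (c : ℝ) (hc : 0 < c) (x : Fin d → ℝ)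
    (D : Matrix (Fin d) (Fin d) ℝ)
    (hD : D = (A⁻¹ + c⁻¹ • 1)⁻¹ + vecMulVec x x)
    (A' : Matrix (Fin d) (Fin d) ℝ)
    (hA' : A' = (1 + c⁻¹ • A)⁻¹) :
    ∀ v : Fin d → ℝ,
      v ⬝ᵥ ((A' * D⁻¹ * vecMulVec x x * D⁻¹ * A' - A⁻¹
        + A' * (D⁻¹ * A' + c⁻¹ • 1)) *ᵥ v) ≤ 0 := by
  intro v
  have hP : (A⁻¹ + c⁻¹ • 1).PosDef := hA.inv.add (PosDef.one.smul (inv_pos.2 hc))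
  have hX : (vecMulVec x x).PosSemidef := posSemidef_vecMulVec_self_star x
  have hneg := laser_technical_negsemidef_general hA.isUnit hA.isHermitian hP.isUnit hP.posSemidef
    hX.isHermitian hD (hD ▸ (hP.inv.add_posSemidef hX).isUnit)
    (hA'.trans (by rw [smul_one_mul])) (hA'.trans (by rw [mul_smul_one]))
  simpa only [star_trivial, neg_mulVec, dotProduct_neg, neg_nonneg] using
    hneg.dotProduct_mulVec_nonneg v
end

section
/- Let M be a d×d real symmetric positive definite matrix and x ∈ ℝ^d, and set D = M + x xᵀ. Then xᵀ D^{-1} x ≤ ln(det D / det M). -/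
open Matrix

/-!
Removing the rank-one term `u vᵀ` from `D = M + u vᵀ`, the matrix determinant lemma gives
`det M = det D * (1 - vᵀ D⁻¹ u)`. Hence `vᵀ D⁻¹ u = 1 - r⁻¹` with `r = det D / det M`, and
`1 - r⁻¹ ≤ log r` for every `r > 0`.
-/

section RankOneUpdate

variable {n R K : Type*} [Fintype n] [DecidableEq n] [CommRing R] [Field K]

theorem det_add_vecMulVec {A : Matrix n n R} (hA : IsUnit A.det) (u v : n → R) :
    (A + vecMulVec u v).det = A.det * (1 + v ⬝ᵥ (A⁻¹ *ᵥ u)) := by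
  rw [vecMulVec_eq Unit, det_add_replicateCol_mul_replicateRow hA, Matrix.mul_assoc,
    ← replicateCol_mulVec, det_unique (n := Unit), Matrix.add_apply, one_apply_eq,
    replicateRow_mul_replicateCol_apply]

theorem det_sub_vecMulVec {A : Matrix n n R} (hA : IsUnit A.det) (u v : n → R) :
    (A - vecMulVec u v).det = A.det * (1 - v ⬝ᵥ (A⁻¹ *ᵥ u)) := by
  rw [sub_eq_add_neg, ← neg_vecMulVec, det_add_vecMulVec hA, mulVec_neg, dotProduct_neg,
    ← sub_eq_add_neg]

theorem dotProduct_inv_add_vecMulVec_mulVec {M : Matrix n n K} {u v : n → K}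
    (hD : (M + vecMulVec u v).det ≠ 0) :
    v ⬝ᵥ ((M + vecMulVec u v)⁻¹ *ᵥ u) = 1 - M.det / (M + vecMulVec u v).det := by
  have hdet := det_sub_vecMulVec hD.isUnit u v
  rw [add_sub_cancel_right, mul_comm, ← div_eq_iff hD] at hdet
  rw [hdet, sub_sub_cancel]

end RankOneUpdate

theorem posDef_add_vecMulVec_self_star {n R : Type*} [Finite n] [Ring R] [PartialOrder R]
    [StarRing R] [StarOrderedRing R] {M : Matrix n n R} (hM : M.PosDef) (x : n → R) :
    (M + vecMulVec x (star x)).PosDef :=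
  hM.add_posSemidef (posSemidef_vecMulVec_self_star x)

theorem quadratic_form_le_log_det_ratio_general {n : Type*} [Fintype n] [DecidableEq n]
    (M : Matrix n n ℝ) (u v : n → ℝ) (hratio : 0 < (M + vecMulVec u v).det / M.det) :
    v ⬝ᵥ ((M + vecMulVec u v)⁻¹ *ᵥ u) ≤ Real.log ((M + vecMulVec u v).det / M.det) := by
  have hD : (M + vecMulVec u v).det ≠ 0 := (div_ne_zero_iff.mp hratio.ne').1
  rw [dotProduct_inv_add_vecMulVec_mulVec hD, ← inv_div]
  exact Real.one_sub_inv_le_log_of_pos hratio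

theorem quadratic_form_le_log_det_ratio (d : ℕ) (hd : 1 ≤ d)
    (M : Matrix (Fin d) (Fin d) ℝ) (hM : M.PosDef) (x : Fin d → ℝ)
    (D : Matrix (Fin d) (Fin d) ℝ) (hD : D = M + vecMulVec x x) :
    x ⬝ᵥ (D⁻¹ *ᵥ x) ≤ Real.log (D.det / M.det) := by
  subst hD
  exact quadratic_form_le_log_det_ratio_general M x x
    (div_pos (posDef_add_vecMulVec_self_star hM x).det_pos hM.det_pos)
end

section
/- Let β > 0, λ ≥ 0, and let γ, x be reals with x² ≤ γ². Define f(λ) = λβ/(λ + β) + x². Then: (1) f(λ) ≤ β + γ²; (2) f(λ) ≤ λ + γ²; (3) f(λ) ≤ max{ λ, (3γ² + √(γ⁴ + 4γ²β))/2 }. -/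
/-!
Writing `λβ/(λ+β) = λ - λ²/(λ+β)` gives the first two bounds and shows that `λβ/(λ+β) + c ≤ λ`
exactly when `cλ + cβ ≤ λ²`. This quadratic condition holds once `λ` is at least
`t = (c + √(c² + 4cβ))/2`, the larger root of `X² - cX - cβ`. If instead `λ ≤ t`, then
`λβ/(λ+β) + c ≤ λ + c ≤ t + c`, and `t + c` is the constant in the third bound.
-/

section Field

variable {K : Type*} [Field K] {a b c : K}

theorem mul_div_add_eq_sub_sq_div_add (hab : a + b ≠ 0) :
    a * b / (a + b) = a - a ^ 2 / (a + b) := by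
  field_simp
  ring

variable [LinearOrder K] [IsStrictOrderedRing K]

theorem mul_div_add_le_left (hab : 0 < a + b) : a * b / (a + b) ≤ a := by
  rw [mul_div_add_eq_sub_sq_div_add hab.ne']
  exact sub_le_self a (by positivity)

theorem mul_div_add_le_right (hab : 0 < a + b) : a * b / (a + b) ≤ b := by
  rw [mul_comm, add_comm]
  exact mul_div_add_le_left (by rwa [add_comm])

theorem mul_div_add_add_le_left_iff (hab : 0 < a + b) :
    a * b / (a + b) + c ≤ a ↔ c * a + c * b ≤ a ^ 2 := by
  rw [mul_div_add_eq_sub_sq_div_add hab.ne', sub_add, sub_le_self_iff, sub_nonneg,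
    le_div_iff₀ hab, mul_add]

end Field

-- If `p ^ 2 + 4 * q < 0`, then `√` returns `0` and `p * x + q ≤ x ^ 2` holds for every `x`.
theorem mul_add_le_sq_of_larger_root_le {p q x : ℝ} (hx : (p + √(p ^ 2 + 4 * q)) / 2 ≤ x) :
    p * x + q ≤ x ^ 2 := by
  have hsqrt : √(p ^ 2 + 4 * q) ≤ 2 * x - p := by linarith
  have hdiscr : p ^ 2 + 4 * q ≤ (2 * x - p) ^ 2 := (Real.sqrt_le_iff.mp hsqrt).2
  linarith

theorem mul_div_add_add_le_max {a b : ℝ} (c : ℝ) (hab : 0 < a + b) :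
    a * b / (a + b) + c ≤ max a ((3 * c + √(c ^ 2 + 4 * c * b)) / 2) := by
  rw [mul_assoc 4 c b]
  rcases le_total ((c + √(c ^ 2 + 4 * (c * b))) / 2) a with root_le | le_root
  · exact le_max_of_le_left <|
      (mul_div_add_add_le_left_iff hab).mpr (mul_add_le_sq_of_larger_root_le root_le)
  · apply le_max_of_le_right
    linarith [mul_div_add_le_left hab]

theorem scalar_operator_lemma_general {β lam c y : ℝ} (hpos : 0 < lam + β) (hy : y ≤ c) :
    lam * β / (lam + β) + y ≤ β + c ∧
    lam * β / (lam + β) + y ≤ lam + c ∧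
    lam * β / (lam + β) + y ≤ max lam ((3 * c + √(c ^ 2 + 4 * c * β)) / 2) :=
  ⟨add_le_add (mul_div_add_le_right hpos) hy,
    add_le_add (mul_div_add_le_left hpos) hy,
    (add_le_add_right hy _).trans (mul_div_add_add_le_max c hpos)⟩

theorem scalar_operator_lemma (β lam γ x : ℝ) (hβ : 0 < β) (hlam : 0 ≤ lam)
    (hx : x ^ 2 ≤ γ ^ 2) :
    lam * β / (lam + β) + x ^ 2 ≤ β + γ ^ 2 ∧
    lam * β / (lam + β) + x ^ 2 ≤ lam + γ ^ 2 ∧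
    lam * β / (lam + β) + x ^ 2 ≤
      max lam ((3 * γ ^ 2 + Real.sqrt (γ ^ 4 + 4 * γ ^ 2 * β)) / 2) := by
  simpa only [← pow_mul, Nat.reduceMul] using
    scalar_operator_lemma_general (add_pos_of_nonneg_of_pos hlam hβ) hx
end

section
/- Let X > 0 and b > 0, and set μ = max{ (9/8)·X², (b + X²)²/(8X²) } and M = max{ 3X², b + X² }. Then M = √(8X²·μ), and for every c with 0 < c ≤ μ, max{ (3X² + √(X⁴ + 4X²c))/2, b + X² } ≤ M. -/
/-!
Put `a = X²` and `s = b + X²`. Multiplying `μ` by `8a` turns its two entries into the squares of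
`3a` and `s`, so `8aμ = M²`. For the bound, `(3a + √(a² + 4ac)) / 2` is the larger root of
`x² - 3ax + 2a² - ac`. Since `8ac ≤ M²`, the value of this quadratic at `M` is at least
`((M - 3a)(7M - 3a) + 7a²) / 8 ≥ 0`, and as `M ≥ 3a` lies to the right of the vertex `3a/2`, it
lies to the right of the larger root.
-/

theorem mul_max_sq_div_sq_div {k x y : ℝ} (hk : 0 < k) (hx : 0 ≤ x) (hy : 0 ≤ y) :
    k * max (x ^ 2 / k) (y ^ 2 / k) = max x y ^ 2 := by
  have sq_max : max x y ^ 2 = max (x ^ 2) (y ^ 2) :=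
    (pow_left_monotoneOn (n := 2)).map_max hx hy
  rw [mul_max_of_nonneg _ _ hk.le, mul_div_cancel₀ _ hk.ne', mul_div_cancel₀ _ hk.ne', sq_max]

theorem larger_quadratic_root_le_iff {p q m : ℝ} (hm : p ≤ 2 * m) :
    (p + √(p ^ 2 - 4 * q)) / 2 ≤ m ↔ 0 ≤ m ^ 2 - p * m + q := by
  calc (p + √(p ^ 2 - 4 * q)) / 2 ≤ m
      ↔ √(p ^ 2 - 4 * q) ≤ 2 * m - p := by constructor <;> intro h <;> linarith
    _ ↔ p ^ 2 - 4 * q ≤ (2 * m - p) ^ 2 := Real.sqrt_le_left (sub_nonneg.mpr hm)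
    _ ↔ 0 ≤ m ^ 2 - p * m + q := by constructor <;> intro h <;> linarith

theorem quadratic_nonneg_of_mul_le_sq {a c m : ℝ} (ha : 0 ≤ a) (hm : 3 * a ≤ m)
    (hc : 8 * a * c ≤ m ^ 2) : 0 ≤ m ^ 2 - 3 * a * m + (2 * a ^ 2 - a * c) := by
  have factors_nonneg : 0 ≤ (m - 3 * a) * (7 * m - 3 * a) :=
    mul_nonneg (by linarith) (by linarith)
  calc 0 ≤ ((m - 3 * a) * (7 * m - 3 * a) + 7 * a ^ 2) / 8 := by positivity
    _ = m ^ 2 - 3 * a * m + (2 * a ^ 2 - m ^ 2 / 8) := by ring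
    _ ≤ m ^ 2 - 3 * a * m + (2 * a ^ 2 - a * c) := by linarith

theorem three_mul_add_sqrt_div_two_le {a c m : ℝ} (ha : 0 ≤ a) (hm : 3 * a ≤ m)
    (hc : 8 * a * c ≤ m ^ 2) : (3 * a + √(a ^ 2 + 4 * a * c)) / 2 ≤ m := by
  have discrim_eq : a ^ 2 + 4 * a * c = (3 * a) ^ 2 - 4 * (2 * a ^ 2 - a * c) := by ring
  rw [discrim_eq, larger_quadratic_root_le_iff (by linarith)]
  exact quadratic_nonneg_of_mul_le_sq ha hm hc

theorem laser_M_mu_relation (X b : ℝ) (hX : 0 < X) (hb : 0 < b)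
    (μ M : ℝ)
    (hμ : μ = max ((9 / 8) * X ^ 2) ((b + X ^ 2) ^ 2 / (8 * X ^ 2)))
    (hM : M = max (3 * X ^ 2) (b + X ^ 2)) :
    M = Real.sqrt (8 * X ^ 2 * μ) ∧
    ∀ c : ℝ, 0 < c → c ≤ μ →
      max ((3 * X ^ 2 + Real.sqrt (X ^ 4 + 4 * X ^ 2 * c)) / 2) (b + X ^ 2) ≤ M := by
  have three_le_M : 3 * X ^ 2 ≤ M := hM ▸ le_max_left _ _
  have b_add_le_M : b + X ^ 2 ≤ M := hM ▸ le_max_right _ _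
  have mul_μ_eq : 8 * X ^ 2 * μ = M ^ 2 := by
    have first_entry : 9 / 8 * X ^ 2 = (3 * X ^ 2) ^ 2 / (8 * X ^ 2) := by field
    rw [hμ, hM, first_entry]
    exact mul_max_sq_div_sq_div (by positivity) (by positivity) (by positivity)
  refine ⟨?_, fun c _ hc ↦ max_le ?_ b_add_le_M⟩
  · have M_nonneg : 0 ≤ M := le_trans (by positivity) three_le_M
    rw [mul_μ_eq, Real.sqrt_sq M_nonneg]
  · have mul_c_le : 8 * X ^ 2 * c ≤ M ^ 2 := mul_μ_eq ▸ by gcongr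
    rw [show X ^ 4 = (X ^ 2) ^ 2 by ring]
    exact three_mul_add_sqrt_div_two_le (sq_nonneg X) three_le_M mul_c_le
end

section
/- Let p ∈ ℝ and Y > 0. The function g(ŷ) = ŷ² + 2Y·|p − ŷ| attains its minimum over ℝ at ŷ* = clip(p, Y) = sign(p)·min{|p|, Y}, i.e., g(clip(p, Y)) ≤ g(ŷ) for all ŷ ∈ ℝ. -/
/-!
The objective `‖y‖ ^ 2 + 2 * Y * ‖p - y‖` makes sense in any real inner product space, with clipping
replaced by the radial retraction onto the ball of radius `Y`. For every `c` with `‖c‖ ≤ Y`,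
Cauchy–Schwarz gives `⟪c, p - y⟫ ≤ Y * ‖p - y‖`, so the quadratic `‖y‖ ^ 2 + 2 * ⟪c, p - y⟫` is a
lower bound for the objective; its minimum over `y` is at `y = c`. If `c` is the clipped point, then
either `c = p`, or `‖c‖ = Y` and `p - c` points in the direction of `c`; in both cases the lower
bound is attained at `c`.
-/

open NormedSpace
open scoped RealInnerProductSpace

section Normed

variable {E : Type*} [NormedAddCommGroup E] [NormedSpace ℝ E]

/-- The radial retraction of `p` onto the closed ball of radius `Y` about the origin: the analogue
of `clip(p, Y)` in a normed space, with `normalize p` in the role of the sign of `p`. -/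
noncomputable def radialClip (p : E) (Y : ℝ) : E := min ‖p‖ Y • normalize p

theorem radialClip_zero_left (Y : ℝ) : radialClip (0 : E) Y = 0 := by
  rw [radialClip, normalize_zero_eq_zero, smul_zero]

theorem radialClip_of_norm_le {p : E} {Y : ℝ} (h : ‖p‖ ≤ Y) : radialClip p Y = p := by
  rw [radialClip, min_eq_left h, norm_smul_normalize]

theorem radialClip_of_le_norm {p : E} {Y : ℝ} (h : Y ≤ ‖p‖) :
    radialClip p Y = Y • normalize p := by
  rw [radialClip, min_eq_right h]

theorem sub_radialClip_of_le_norm {p : E} {Y : ℝ} (h : Y ≤ ‖p‖) :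
    p - radialClip p Y = (‖p‖ - Y) • normalize p := by
  rw [radialClip_of_le_norm h, sub_smul, norm_smul_normalize]

theorem norm_radialClip_le (p : E) {Y : ℝ} (hY : 0 ≤ Y) : ‖radialClip p Y‖ ≤ Y := by
  rcases eq_or_ne p 0 with rfl | hp
  · rwa [radialClip_zero_left, norm_zero]
  · rw [radialClip, norm_smul_of_nonneg (le_min (norm_nonneg p) hY), norm_normalize hp, mul_one]
    exact min_le_right _ _

end Normed

section Inner

variable {E : Type*} [NormedAddCommGroup E] [InnerProductSpace ℝ E]

theorem inner_radialClip_sub (p : E) (Y : ℝ) :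
    ⟪radialClip p Y, p - radialClip p Y⟫ = Y * ‖p - radialClip p Y‖ := by
  rcases le_total ‖p‖ Y with h | h
  · simp only [radialClip_of_norm_le h, sub_self, inner_zero_right, norm_zero, mul_zero]
  rcases eq_or_ne p 0 with rfl | hp
  · simp only [radialClip_zero_left, sub_self, inner_zero_right, norm_zero, mul_zero]
  · rw [sub_radialClip_of_le_norm h, radialClip_of_le_norm h, real_inner_smul_left,
      real_inner_smul_right, real_inner_self_eq_norm_sq, norm_smul_of_nonneg (sub_nonneg.mpr h),
      norm_normalize hp, one_pow]

theorem norm_sq_add_two_mul_inner_sub_le (c p y : E) :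
    ‖c‖ ^ 2 + 2 * ⟪c, p - c⟫ ≤ ‖y‖ ^ 2 + 2 * ⟪c, p - y⟫ := by
  have norm_sub_sq_nonneg : 0 ≤ ‖y‖ ^ 2 - 2 * ⟪c, y⟫ + ‖c‖ ^ 2 := by
    rw [real_inner_comm, ← norm_sub_sq_real]
    positivity
  rw [inner_sub_right, inner_sub_right, real_inner_self_eq_norm_sq]
  linarith

theorem clip_minimizes_general (p : E) {Y : ℝ} (hY : 0 ≤ Y) (y : E) :
    ‖radialClip p Y‖ ^ 2 + 2 * Y * ‖p - radialClip p Y‖ ≤ ‖y‖ ^ 2 + 2 * Y * ‖p - y‖ := by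
  set c := radialClip p Y with hc
  have inner_le : ⟪c, p - y⟫ ≤ Y * ‖p - y‖ :=
    (real_inner_le_norm c (p - y)).trans <| by gcongr; exact norm_radialClip_le p hY
  calc ‖c‖ ^ 2 + 2 * Y * ‖p - c‖
      = ‖c‖ ^ 2 + 2 * ⟪c, p - c⟫ := by rw [hc, inner_radialClip_sub, mul_assoc]
    _ ≤ ‖y‖ ^ 2 + 2 * ⟪c, p - y⟫ := norm_sq_add_two_mul_inner_sub_le c p y
    _ ≤ ‖y‖ ^ 2 + 2 * (Y * ‖p - y‖) := by gcongr
    _ = ‖y‖ ^ 2 + 2 * Y * ‖p - y‖ := by rw [mul_assoc]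

end Inner

theorem normalize_eq_sign (p : ℝ) : NormedSpace.normalize p = Real.sign p := by
  rcases lt_trichotomy p 0 with hp | rfl | hp
  · rw [NormedSpace.normalize, Real.norm_of_nonpos hp.le, Real.sign_of_neg hp, smul_eq_mul, inv_neg,
      neg_mul, inv_mul_cancel₀ hp.ne]
  · rw [normalize_zero_eq_zero, Real.sign_zero]
  · rw [NormedSpace.normalize, Real.norm_of_nonneg hp.le, Real.sign_of_pos hp, smul_eq_mul,
      inv_mul_cancel₀ hp.ne']

theorem radialClip_eq_sign_mul_min (p Y : ℝ) : radialClip p Y = Real.sign p * min |p| Y := by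
  rw [radialClip, normalize_eq_sign, Real.norm_eq_abs, smul_eq_mul, mul_comm]

theorem clip_minimizes (p Y : ℝ) (hY : 0 < Y) :
    ∀ yhat : ℝ,
      (Real.sign p * min |p| Y) ^ 2 + 2 * Y * |p - Real.sign p * min |p| Y| ≤
        yhat ^ 2 + 2 * Y * |p - yhat| := by
  simpa only [radialClip_eq_sign_mul_min, Real.norm_eq_abs, sq_abs] using
    clip_minimizes_general p hY.le
end
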